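/- Let (Γ,·) be a finite group of odd order such that for every proper subgroup Γ' of Γ, every Γ'-labelled complete digraph on |Γ'|+1 vertices contains a balanced cycle. Let (D,γ) be a Γ-labelled complete digraph on |Γ|+1 vertices containing no balanced directed cycle, and suppose (X*,u*,v*,γ*,R*) is an efficient tuple in (D,γ) such that |X*| is minimum among all efficient tuples in (D,γ) and in (D,inv(γ)). Then there exists a super-efficient tuple in (D,γ). -/

import Mathlib

/-!
If `|Xs| ≤ |Rs|` there is nothing to do, so suppose `|Xs| = |Rs| + 1`, and let `Y` be the
complement of `Xs`, so that `|Y| = |Γ| - |Rs|`. Let `K` be the left stabilizer of `Rs`. It is a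
proper subgroup: otherwise `Rs = Γ` contains `γs(vs, us)⁻¹`, and a path realising this value
closes up to a balanced cycle.

For distinct `a, b ∈ Y`, prepending `a` or `a, b` to the paths from `us` to `vs` shows that all of
`γs(a, us) Rs ∪ γs(a, b) γs(b, us) Rs` is realised by paths from `a` to `vs` inside
`Xs ∪ {a, b}`. This union keeps the right stabilizing element `h` of `Rs`. If the two translates
differ, the second one contributes at least the three new elements `s, s h, s h ^ 2` (distinct
because `|Γ|` is odd), which gives a super-efficient tuple.

Otherwise `δ(a, b) = γs(a, us)⁻¹ γs(a, b) γs(b, us)` lies in `K` for all distinct `a, b ∈ Y`, and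
`δ` is `γs` restricted to `Y` up to shifting, so it has no balanced cycle. As `|K|` divides
`|Γ| - |Rs| > 0`, we have `|Y| ≥ |K|`, and the hypothesis on `K` forces `|Y| = |K|`.
Some `y ∈ Y` is then such that every element of `K` is the `δ`-value of a path in `Y` starting at
`y` (`exists_start_all_values`): if each `y` missed a value `k_y`, one could add a vertex `w`
with labels `k_y⁻¹` on `(w, y)` and `1` on `(y, w)` without creating balanced cycles. Appending
`us` to these paths gives an efficient tuple on `Y ∪ {us}` with value set `γs(y, us) K`. Minimality
yields `|Rs| ≤ |K|`, hence `|Γ| ≤ 2 |K|`, which is impossible for a proper subgroup of a group of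
odd order.
-/

/-- The cumulative product of the arc-labels of the directed cycle
`c = [v₀, v₁, …, v_{ℓ-1}]` (with closing arc `(v_{ℓ-1}, v₀)`). -/
def cycleProd {V Γ : Type} [Monoid Γ] (γ : V → V → Γ) (c : List V) : Γ :=
  ((c.zip (c.rotate 1)).map fun e => γ e.1 e.2).prod

/-- `c` is a directed cycle of the complete digraph (a list of at least two
pairwise distinct vertices) which is balanced with respect to `γ`. -/
def IsBalancedCycle {V Γ : Type} [Monoid Γ] (γ : V → V → Γ) (c : List V) : Prop :=
  2 ≤ c.length ∧ c.Nodup ∧ cycleProd γ c = 1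

/-- The cumulative product of the arc-labels along the directed path given by the
list of vertices `p` (a single-vertex path has value `1`). -/
def pathProd {V Γ : Type} [Monoid Γ] (γ : V → V → Γ) (p : List V) : Γ :=
  ((p.zip p.tail).map fun e => γ e.1 e.2).prod

/-- `R_{D,γ}(X, x, y)`: the set of `γ`-values of directed paths inside `X`
from `x` to `y`. -/
def pathVals {V Γ : Type} [Monoid Γ] (γ : V → V → Γ) (X : Set V) (x y : V) : Set Γ :=
  {g | ∃ p : List V, p ≠ [] ∧ p.Nodup ∧ (∀ w ∈ p, w ∈ X) ∧
        p.head? = some x ∧ p.getLast? = some y ∧ pathProd γ p = g}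

/-- The left stabilizer `stab_l(S) = {g : g·S = S}` of a subset `S` of a group. -/
def stabl {Γ : Type} [Group Γ] (S : Set Γ) : Set Γ :=
  {g | (fun s => g * s) '' S = S}

/-- The right stabilizer `stab_r(S) = {g : S·g = S}` of a subset `S` of a group. -/
def stabr {Γ : Type} [Group Γ] (S : Set Γ) : Set Γ :=
  {g | (fun s => s * g) '' S = S}

/-- The labelling obtained from `γ` by shifting by `g` at the vertex `v`:
labels of arcs into `v` are multiplied by `g⁻¹` on the right, labels of arcs
out of `v` are multiplied by `g` on the left, all other labels are unchanged. -/
def shiftLab {V Γ : Type} [Group Γ] [DecidableEq V] (γ : V → V → Γ) (g : Γ) (v : V) :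
    V → V → Γ :=
  fun a b =>
    if a = b then γ a b
    else if b = v then γ a b * g⁻¹
    else if a = v then g * γ a b
    else γ a b

/-- Two labellings are shifting-equivalent if one is obtained from the other by a
finite sequence of shifting operations. -/
def ShiftEquiv {V Γ : Type} [Group Γ] [DecidableEq V] (γ γ' : V → V → Γ) : Prop :=
  Relation.ReflTransGen (fun α β => ∃ g v, β = shiftLab α g v) γ γ'

/-- `(X, u, v, γ', R)` is an efficient tuple in `(D, γ)`: `u, v ∈ X` are distinct,
`γ'` is shifting-equivalent to `γ`, and `R ⊆ R_{D,γ'}(X,u,v)` has a non-trivial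
right stabilizer and satisfies `|R| ≥ |X| - 1`. -/
def IsEfficientTuple {V Γ : Type} [Group Γ] [DecidableEq V] (γ : V → V → Γ)
    (X : Set V) (u v : V) (γ' : V → V → Γ) (R : Set Γ) : Prop :=
  u ∈ X ∧ v ∈ X ∧ u ≠ v ∧ ShiftEquiv γ γ' ∧ R ⊆ pathVals γ' X u v ∧
    (∃ g ∈ stabr R, g ≠ 1) ∧ X.ncard ≤ R.ncard + 1

/-- A super-efficient tuple is an efficient tuple with `|R| ≥ |X|`. -/
def IsSuperEfficientTuple {V Γ : Type} [Group Γ] [DecidableEq V] (γ : V → V → Γ)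
    (X : Set V) (u v : V) (γ' : V → V → Γ) (R : Set Γ) : Prop :=
  IsEfficientTuple γ X u v γ' R ∧ X.ncard ≤ R.ncard

/-- The inversion of a labelling: `inv(γ)(u,v) := γ(v,u)⁻¹`. -/
def invLab {V Γ : Type} [Group Γ] (γ : V → V → Γ) : V → V → Γ :=
  fun a b => (γ b a)⁻¹

/-! ### Path and cycle products -/

lemma pathProd_singleton {V Γ : Type} [Monoid Γ] (γ : V → V → Γ) (a : V) :
    pathProd γ [a] = 1 := by simp [pathProd]

lemma pathProd_cons_cons {V Γ : Type} [Monoid Γ] (γ : V → V → Γ) (a b : V) (l : List V) :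
    pathProd γ (a :: b :: l) = γ a b * pathProd γ (b :: l) := by simp [pathProd]

lemma pathProd_append {V Γ : Type} [Monoid Γ] (γ : V → V → Γ) (a : V) (r : List V) :
    ∀ l : List V, pathProd γ (l ++ a :: r) = pathProd γ (l ++ [a]) * pathProd γ (a :: r)
  | [] => by simp [pathProd_singleton]
  | [b] => by simp [pathProd_cons_cons, pathProd_singleton]
  | b :: c :: l => by
    have := pathProd_append γ a r (c :: l)
    simp only [List.cons_append, pathProd_cons_cons] at this ⊢
    rw [this, mul_assoc]

lemma cycleProd_cons {V Γ : Type} [Monoid Γ] (γ : V → V → Γ) (a : V) (l : List V) :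
    cycleProd γ (a :: l) = pathProd γ (a :: l ++ [a]) := by
  have h : ((a :: l) ++ [a]).zip (l ++ [a]) = (a :: l).zip (l ++ [a]) := by
    have := List.zip_append (l₁ := a :: l) (r₁ := [a]) (l₂ := l ++ [a]) (r₂ := []) (by simp)
    simpa using this
  unfold cycleProd pathProd
  rw [show ((a :: l) ++ [a]).tail = l ++ [a] by simp, h]
  simp

/-- Being balanced does not depend on the vertex at which the cycle starts. -/
lemma IsBalancedCycle.rotate {V Γ : Type} [Group Γ] {γ : V → V → Γ} {s t : List V} {a : V}
    (h : IsBalancedCycle γ (s ++ a :: t)) : IsBalancedCycle γ (a :: t ++ s) := by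
  obtain ⟨h1, h2, h3⟩ := h
  refine ⟨by simp at h1 ⊢; omega, (List.perm_append_comm.nodup_iff).1 h2, ?_⟩
  cases s with
  | nil => simpa using h3
  | cons b s =>
    rw [List.cons_append, cycleProd_cons] at h3 ⊢
    have e1 : b :: (s ++ a :: t) ++ [b] = (b :: s) ++ a :: (t ++ [b]) := by simp
    have e2 : a :: (t ++ b :: s) ++ [a] = (a :: t) ++ b :: (s ++ [a]) := by simp
    rw [e1, pathProd_append] at h3
    rw [e2, pathProd_append]
    exact mul_eq_one_comm.1 h3

/-- Path products are compatible with relabelling the vertices along `φ`, changing the group along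
`ι` and shifting by `f`. Only labels of arcs between distinct vertices matter. -/
lemma pathProd_gauge {V W Γ K : Type} [Group Γ] [Group K] (ι : K →* Γ) (φ : W → V)
    (f : W → Γ) (γ : V → V → Γ) (δ : W → W → K)
    (h : ∀ a b, a ≠ b → ι (δ a b) = f a * γ (φ a) (φ b) * (f b)⁻¹) :
    ∀ (l : List W) (a b : W), (a :: l).IsChain (· ≠ ·) → (a :: l).getLast? = some b →
      ι (pathProd δ (a :: l)) = f a * pathProd γ ((a :: l).map φ) * (f b)⁻¹
  | [], a, b, _, hb => by
    have : a = b := by simpa using hb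
    subst this
    simp [pathProd_singleton]
  | c :: l, a, b, hc, hb => by
    rw [List.isChain_cons_cons] at hc
    have ih := pathProd_gauge ι φ f γ δ h l c b hc.2 (by simpa using hb)
    simp only [List.map_cons, pathProd_cons_cons, map_mul] at ih ⊢
    rw [ih, h a c hc.1]
    group

lemma isChain_ne_of_nodup {V : Type} {l : List V} (h : l.Nodup) : l.IsChain (· ≠ ·) :=
  List.Pairwise.isChain h

lemma IsBalancedCycle.gauge {V W Γ K : Type} [Group Γ] [Group K] (ι : K →* Γ) (φ : W → V)
    (hφ : Function.Injective φ) (f : W → Γ) (γ : V → V → Γ) (δ : W → W → K)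
    (h : ∀ a b, a ≠ b → ι (δ a b) = f a * γ (φ a) (φ b) * (f b)⁻¹)
    {c : List W} (hc : IsBalancedCycle δ c) : IsBalancedCycle γ (c.map φ) := by
  obtain ⟨h1, h2, h3⟩ := hc
  refine ⟨by simpa using h1, h2.map hφ, ?_⟩
  match c, h1, h2, h3 with
  | a :: b :: l, _, h2, h3 =>
    have hch : (a :: ((b :: l) ++ [a])).IsChain (· ≠ ·) := by
      have h5 : ((b :: l) ++ [a]).Nodup := by
        have : ((b :: l) ++ [a]).Perm (a :: b :: l) := List.perm_append_comm
        exact this.nodup_iff.2 h2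
      have h4 := isChain_ne_of_nodup h5
      rw [List.cons_append] at h4 ⊢
      rw [List.isChain_cons_cons]
      exact ⟨by rintro rfl; simp at h2, h4⟩
    have := pathProd_gauge ι φ f γ δ h ((b :: l) ++ [a]) a a hch
      (by rw [← List.cons_append, List.getLast?_append]; simp)
    rw [cycleProd_cons] at h3
    rw [List.cons_append] at h3
    rw [h3, map_one] at this
    rw [List.map_cons, cycleProd_cons]
    have h6 := mul_inv_eq_one.1 this.symm
    simpa using h6

lemma ShiftEquiv.exists_gauge {V Γ : Type} [Group Γ] [DecidableEq V] {γ γ' : V → V → Γ}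
    (h : ShiftEquiv γ γ') :
    ∃ f : V → Γ, ∀ a b, a ≠ b → γ' a b = f a * γ a b * (f b)⁻¹ := by
  induction h with
  | refl => exact ⟨fun _ => 1, by simp⟩
  | tail _ h ih =>
    obtain ⟨f, hf⟩ := ih
    obtain ⟨g, v, rfl⟩ := h
    refine ⟨fun a => if a = v then g * f a else f a, fun a b hab => ?_⟩
    simp only [shiftLab, if_neg hab]
    by_cases hb : b = v
    · have ha : a ≠ v := fun h => hab (h.trans hb.symm)
      simp [hb, ha, hf a v ha, mul_assoc]
    · by_cases ha : a = v
      · subst ha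
        simp [hb, hf a b hab, mul_assoc]
      · simp [ha, hb, hf a b hab]

/-! ### Labellings with values in a proper subgroup -/

/-- The existence of balanced cycles on `|K| + 1` vertices, for labellings of an arbitrary vertex
type with at least `|K| + 1` elements whose non-loop labels lie in `K`. -/
lemma exists_balanced_of_card {Γ W : Type} [Group Γ] [Fintype Γ] [Fintype W] (K : Subgroup Γ)
    (hK : ∀ δ : Fin (Nat.card K + 1) → Fin (Nat.card K + 1) → K,
        ∃ c : List (Fin (Nat.card K + 1)), IsBalancedCycle δ c)
    (hW : Nat.card K + 1 ≤ Fintype.card W) (δ : W → W → Γ) (hδ : ∀ a b, a ≠ b → δ a b ∈ K) :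
    ∃ c : List W, IsBalancedCycle δ c := by
  classical
  obtain ⟨φ⟩ : Nonempty (Fin (Nat.card K + 1) ↪ W) :=
    Function.Embedding.nonempty_of_card_le (by simpa using hW)
  obtain ⟨c, hc⟩ := hK fun a b =>
    if h : a = b then 1 else ⟨δ (φ a) (φ b), hδ _ _ (φ.injective.ne h)⟩
  refine ⟨c.map φ, hc.gauge K.subtype φ φ.injective (fun _ => 1) δ _ fun a b hab => ?_⟩
  simp [hab]

/-- In a `K`-labelling of at least `|K|` vertices without balanced cycles, all elements of `K`
are values of paths starting at some common vertex. Otherwise every vertex `y` misses a value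
`k y`, and adding a vertex with out-labels `(k y)⁻¹` and in-labels `1` creates no balanced
cycle. -/
lemma exists_start_all_values {Γ W : Type} [Group Γ] [Fintype Γ] [Fintype W] (K : Subgroup Γ)
    (hK : ∀ δ : Fin (Nat.card K + 1) → Fin (Nat.card K + 1) → K,
        ∃ c : List (Fin (Nat.card K + 1)), IsBalancedCycle δ c)
    (hW : Nat.card K ≤ Fintype.card W) (δ : W → W → Γ) (hδ : ∀ a b, a ≠ b → δ a b ∈ K)
    (hbal : ¬ ∃ c : List W, IsBalancedCycle δ c) :
    ∃ y : W, ∀ k ∈ K, ∃ q : List W, (y :: q).Nodup ∧ pathProd δ (y :: q) = k := by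
  by_contra! hcon
  choose k hkK hk using hcon
  let E : Option W → Option W → Γ
    | none, none => 1
    | none, some b => (k b)⁻¹
    | some _, none => 1
    | some a, some b => δ a b
  have hE : ∀ a b, a ≠ b → E a b ∈ K := by
    rintro (_ | a) (_ | b) hab
    · exact K.one_mem
    · exact K.inv_mem (hkK b)
    · exact K.one_mem
    · exact hδ a b (by rintro rfl; exact hab rfl)
  obtain ⟨c, hc⟩ := exists_balanced_of_card K hK (by simpa using hW) E hE
  have hlift : ∀ l : List (Option W), none ∉ l → ∃ l' : List W, l = l'.map some := by
    intro l hl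
    induction l with
    | nil => exact ⟨[], rfl⟩
    | cons x l ih =>
      obtain ⟨l', rfl⟩ := ih (by simp_all)
      cases x with
      | none => simp at hl
      | some x => exact ⟨x :: l', rfl⟩
  have hpath : ∀ l : List W, pathProd E (l.map some) = pathProd δ l := by
    intro l
    simp only [pathProd, List.zip_map, ← List.map_tail, List.map_map]
    rfl
  by_cases hn : none ∈ c
  · obtain ⟨s, t, rfl⟩ := List.append_of_mem hn
    obtain ⟨h1, h2, h3⟩ := hc.rotate
    rw [List.cons_append] at h1 h2 h3
    rw [List.nodup_cons] at h2
    obtain ⟨p, hp⟩ := hlift _ h2.1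
    rw [hp] at h1 h2 h3
    cases p with
    | nil => simp at h1
    | cons y q =>
      have hnd : (y :: q).Nodup := h2.2.of_map
      refine hk y q hnd ?_
      rw [cycleProd_cons] at h3
      -- the arc closing the cycle has label `1`
      have hlast : pathProd E ((y :: q).map some ++ [none]) = pathProd δ (y :: q) := by
        rw [← hpath]
        rcases List.eq_nil_or_concat (y :: q) with h | ⟨l, z, h⟩
        · simp at h
        · rw [h]
          simp only [List.map_append, List.map_cons, List.map_nil,
            List.append_assoc, List.cons_append, List.nil_append, List.concat_eq_append]
          rw [pathProd_append]
          simp [pathProd_cons_cons, pathProd_singleton, E]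
      rw [List.cons_append, List.map_cons, List.cons_append, pathProd_cons_cons,
        ← List.cons_append, ← List.map_cons, hlast] at h3
      exact (inv_mul_eq_one.1 h3).symm
  · obtain ⟨c', rfl⟩ := hlift c hn
    obtain ⟨h1, h2, h3⟩ := hc
    refine hbal ⟨c', by simpa using h1, h2.of_map, ?_⟩
    rw [← h3]
    simp only [cycleProd, List.zip_map, ← List.map_rotate, List.map_map]
    rfl

/-! ### Stabilizers and cardinalities -/

lemma card_dvd_ncard_of_mul_mem {Γ : Type} [Group Γ] [Finite Γ] (K : Subgroup Γ) (S : Set Γ)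
    (h : ∀ k ∈ K, ∀ s ∈ S, k * s ∈ S) : Nat.card K ∣ S.ncard := by
  have e : (QuotientGroup.mk : Γ → Γ ⧸ K) ⁻¹' (QuotientGroup.mk '' S⁻¹) = S⁻¹ := by
    apply Set.Subset.antisymm _ (Set.subset_preimage_image _ _)
    rintro x ⟨s, hs, hx⟩
    have h1 : s⁻¹ * x ∈ K := QuotientGroup.eq.1 hx
    have := h _ (K.inv_mem h1) _ hs
    simpa using this
  have := Nat.card_congr
    (QuotientGroup.preimageMkEquivSubgroupProdSet K (QuotientGroup.mk '' S⁻¹))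
  rw [e, Nat.card_prod] at this
  have h2 : Nat.card (S⁻¹ : Set Γ) = S.ncard := by
    rw [Nat.card_coe_set_eq, Set.ncard_inv]
  rw [← h2, this]
  exact dvd_mul_right _ _

lemma mem_stabr_of_mul_mem {Γ : Type} [Group Γ] [Finite Γ] {S : Set Γ} {g : Γ}
    (h : ∀ s ∈ S, s * g ∈ S) : g ∈ stabr S := by
  apply Set.eq_of_subset_of_ncard_le
  · rintro _ ⟨s, hs, rfl⟩
    exact h s hs
  · rw [Set.ncard_image_of_injective _ (mul_left_injective g)]
  · exact S.toFinite

lemma mul_mem_iff_of_mem_stabr {Γ : Type} [Group Γ] {S : Set Γ} {g : Γ}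
    (h : g ∈ stabr S) (s : Γ) : s * g ∈ S ↔ s ∈ S := by
  have h : (fun s => s * g) '' S = S := h
  constructor
  · intro hs
    rw [← h] at hs
    obtain ⟨t, ht, hts⟩ := hs
    rwa [← mul_right_cancel hts]
  · intro hs
    rw [← h]
    exact ⟨s, hs, rfl⟩

/-- In a group of odd order, a proper inclusion of sets with a common non-trivial right
stabilizing element adds at least three elements. -/
lemma ncard_add_three_le {Γ : Type} [Group Γ] [Fintype Γ] (hodd : Odd (Fintype.card Γ))
    {A B : Set Γ} {h : Γ} (h1 : h ≠ 1) (hA : h ∈ stabr A) (hB : h ∈ stabr B) (hAB : A ⊆ B)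
    {s : Γ} (hsB : s ∈ B) (hsA : s ∉ A) : A.ncard + 3 ≤ B.ncard := by
  have hh2 : h * h ≠ 1 := by
    intro hh
    apply h1
    have hc : Nat.Coprime (orderOf h) 2 :=
      (Nat.coprime_two_right.2 (hodd.of_dvd_nat orderOf_dvd_card))
    have h2 : orderOf h ∣ 2 := orderOf_dvd_of_pow_eq_one (by rw [pow_two, hh])
    exact orderOf_eq_one_iff.1 (hc.eq_one_of_dvd h2)
  have hT : ({s, s * h, s * h * h} : Set Γ).ncard = 3 := by
    rw [Set.ncard_eq_three]
    exact ⟨s, s * h, s * h * h, by simpa using h1,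
      by rw [mul_assoc]; simpa using hh2, by simpa using h1, rfl⟩
  have hd : Disjoint A ({s, s * h, s * h * h} : Set Γ) := by
    rw [Set.disjoint_right]
    rintro x (rfl | rfl | rfl)
    · exact hsA
    · rwa [mul_mem_iff_of_mem_stabr hA]
    · rwa [mul_mem_iff_of_mem_stabr hA, mul_mem_iff_of_mem_stabr hA]
  rw [← hT, ← Set.ncard_union_eq hd]
  apply Set.ncard_le_ncard _ B.toFinite
  apply Set.union_subset hAB
  rintro x (rfl | rfl | rfl)
  · exact hsB
  · rwa [mul_mem_iff_of_mem_stabr hB]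
  · rwa [mul_mem_iff_of_mem_stabr hB, mul_mem_iff_of_mem_stabr hB]

/-- Prepending a new vertex to the paths starting at `u`. -/
lemma pathVals_cons {V Γ : Type} [Monoid Γ] {γ : V → V → Γ} {X : Set V} {a u v : V} {r : Γ}
    (ha : a ∉ X) (hr : r ∈ pathVals γ X u v) : γ a u * r ∈ pathVals γ (insert a X) a v := by
  obtain ⟨p, h0, h1, h2, h3, h4, rfl⟩ := hr
  cases p with
  | nil => exact absurd rfl h0
  | cons b p =>
    have : b = u := by simpa using h3
    subst this
    refine ⟨a :: b :: p, by simp, List.nodup_cons.2 ⟨fun h => ha (h2 _ h), h1⟩, ?_, rfl, ?_,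
      pathProd_cons_cons _ _ _ _⟩
    · intro w hw
      rcases List.mem_cons.1 hw with rfl | hw
      · exact Set.mem_insert _ _
      · exact Set.mem_insert_of_mem _ (h2 w hw)
    · simpa using h4

lemma pathVals_mono {V Γ : Type} [Monoid Γ] {γ : V → V → Γ} {X X' : Set V} {u v : V}
    (h : X ⊆ X') : pathVals γ X u v ⊆ pathVals γ X' u v := by
  rintro _ ⟨p, h0, h1, h2, h3⟩
  exact ⟨p, h0, h1, fun w hw => h (h2 w hw), h3⟩

/-! ### The super-efficient tuple -/

open Pointwise in
/-- Two vertices outside `X` along which the two translates of `R` differ yield a super-efficient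
tuple. -/
lemma super_of_translates_ne {Γ V : Type} [Group Γ] [Fintype Γ] [Fintype V] [DecidableEq V]
    (hodd : Odd (Fintype.card Γ)) {γ γs : V → V → Γ} {X : Set V} {u v : V} {R : Set Γ}
    (heff : IsEfficientTuple γ X u v γs R) {a b : V} (ha : a ∉ X) (hb : b ∉ X) (hab : a ≠ b)
    (hne : γs a u • R ≠ (γs a b * γs b u) • R) :
    ∃ (X : Set V) (u v : V) (γ' : V → V → Γ) (R : Set Γ),
      IsSuperEfficientTuple γ X u v γ' R := by
  obtain ⟨hu, hv, huv, hsh, hR, ⟨h, hh, hh1⟩, hcard⟩ := heff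
  have hst : ∀ g : Γ, ∀ s ∈ g • R, s * h ∈ g • R := by
    rintro g _ ⟨r, hr, rfl⟩
    refine ⟨r * h, (mul_mem_iff_of_mem_stabr hh r).2 hr, ?_⟩
    simp [mul_assoc]
  set R' : Set Γ := γs a u • R ∪ (γs a b * γs b u) • R with hR'
  have hstR' : h ∈ stabr R' := mem_stabr_of_mul_mem fun s hs =>
    hs.imp (hst _ s) (hst _ s)
  obtain ⟨s, hsB, hsA⟩ : ∃ s ∈ (γs a b * γs b u) • R, s ∉ γs a u • R := by
    by_contra! hsub
    exact hne (Set.eq_of_subset_of_ncard_le hsub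
      (by rw [Set.ncard_smul_set, Set.ncard_smul_set]) (Set.toFinite _)).symm
  have h3 := ncard_add_three_le hodd hh1 (mem_stabr_of_mul_mem (hst (γs a u))) hstR'
    Set.subset_union_left (Or.inr hsB) hsA
  rw [Set.ncard_smul_set] at h3
  have hX' : (insert a (insert b X)).ncard = X.ncard + 2 := by
    rw [Set.ncard_insert_of_notMem (by simp [hab, ha]), Set.ncard_insert_of_notMem hb]
  refine ⟨insert a (insert b X), a, v, γs, R', ⟨Set.mem_insert _ _, by simp [hv],
    fun e => ha (e ▸ hv), hsh, ?_, ⟨h, hstR', hh1⟩, by omega⟩, by omega⟩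
  rintro _ (⟨r, hr, rfl⟩ | ⟨r, hr, rfl⟩)
  · exact pathVals_mono (Set.insert_subset_insert (Set.subset_insert _ _))
      (pathVals_cons ha (hR hr))
  · have := pathVals_cons (a := a) (by simp [hab, ha]) (pathVals_cons hb (hR hr))
    simpa [mul_assoc] using this

open Pointwise in
/-- Claim 2. Let `Γ` be a finite group of odd order such that for
every proper subgroup `Γ'`, every `Γ'`-labelled complete digraph on `|Γ'| + 1`
vertices contains a balanced cycle. Let `(D, γ)` be a `Γ`-labelled complete digraph
on `|Γ| + 1` vertices with no balanced cycle, and let `(Xs, us, vs, γs, Rs)` be an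
efficient tuple in `(D, γ)` with `|Xs|` minimum among all efficient tuples in
`(D, γ)` and in `(D, inv(γ))`. Then there exists a super-efficient tuple in
`(D, γ)`. -/
theorem claim2_super_efficient_exists {Γ V : Type} [Group Γ] [Fintype Γ]
    [Fintype V] [DecidableEq V]
    (hodd : Odd (Fintype.card Γ))
    (hsub : ∀ Γ' : Subgroup Γ, Γ' ≠ ⊤ →
      ∀ δ : Fin (Nat.card Γ' + 1) → Fin (Nat.card Γ' + 1) → Γ',
        ∃ c : List (Fin (Nat.card Γ' + 1)), IsBalancedCycle δ c)
    (hV : Fintype.card V = Fintype.card Γ + 1)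
    (γ : V → V → Γ)
    (hbal : ¬ ∃ c : List V, IsBalancedCycle γ c)
    (Xs : Set V) (us vs : V) (γs : V → V → Γ) (Rs : Set Γ)
    (heff : IsEfficientTuple γ Xs us vs γs Rs)
    (hmin : ∀ (X : Set V) (u v : V) (γ' : V → V → Γ) (R : Set Γ),
      (IsEfficientTuple γ X u v γ' R ∨ IsEfficientTuple (invLab γ) X u v γ' R) →
      Xs.ncard ≤ X.ncard) :
    ∃ (X : Set V) (u v : V) (γ' : V → V → Γ) (R : Set Γ),
      IsSuperEfficientTuple γ X u v γ' R := by
  by_cases hsup : Xs.ncard ≤ Rs.ncard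
  · exact ⟨Xs, us, vs, γs, Rs, heff, hsup⟩
  have heff' := heff
  obtain ⟨hu, hv, huv, hsh, hR, ⟨h, hh, hh1⟩, hcard⟩ := heff
  by_cases htr : ∃ a b, a ∉ Xs ∧ b ∉ Xs ∧ a ≠ b ∧ γs a us • Rs ≠ (γs a b * γs b us) • Rs
  · obtain ⟨a, b, ha, hb, hab, hne⟩ := htr
    exact super_of_translates_ne hodd heff' ha hb hab hne
  exfalso
  push Not at htr
  obtain ⟨f, hf⟩ := hsh.exists_gauge
  have hbals : ¬ ∃ c : List V, IsBalancedCycle γs c := by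
    rintro ⟨c, hc⟩
    exact hbal ⟨_, hc.gauge (MonoidHom.id Γ) id Function.injective_id f γ γs hf⟩
  -- a path of value `γs(vs, us)⁻¹` would close up to a balanced cycle
  have hmiss : (γs vs us)⁻¹ ∉ Rs := by
    intro hmem
    obtain ⟨p, h0, h1, h2, h3, h4, h5⟩ := hR hmem
    match p, h0, h1, h3, h4, h5 with
    | [w], _, _, h3, h4, _ =>
      simp at h3 h4
      exact huv (h3.symm.trans h4)
    | w :: x :: p, _, h1, h3, h4, h5 =>
      have hw : w = us := by simpa using h3
      subst hw
      refine hbals ⟨w :: x :: p, by simp, h1, ?_⟩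
      rw [cycleProd_cons]
      obtain ⟨l, hl⟩ := List.getLast?_eq_some_iff.1 h4
      rw [hl] at h5 ⊢
      rw [List.append_assoc, List.cons_append, List.nil_append, pathProd_append, h5]
      simp [pathProd_cons_cons, pathProd_singleton]
  have hXpos : 0 < Xs.ncard := (Set.ncard_pos Xs.toFinite).2 ⟨us, hu⟩
  have hX2 : 1 < Xs.ncard := (Set.one_lt_ncard Xs.toFinite).2 ⟨us, hu, vs, hv, huv⟩
  have hRpos : 0 < Rs.ncard := by omega
  have hRΓ := Set.ncard_add_ncard_compl Rs
  have hXV := Set.ncard_add_ncard_compl Xs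
  rw [Nat.card_eq_fintype_card] at hRΓ hXV
  have hYR : Xsᶜ.ncard = Rsᶜ.ncard := by omega
  set K : Subgroup Γ := MulAction.stabilizer Γ Rs with hKdef
  have hKtop : K ≠ ⊤ := by
    intro htop
    obtain ⟨r, hr⟩ := (Set.ncard_pos Rs.toFinite).1 hRpos
    have hk : (γs vs us)⁻¹ * r⁻¹ ∈ K := by rw [htop]; trivial
    rw [hKdef, MulAction.mem_stabilizer_set] at hk
    have := (hk r).2 hr
    rw [smul_eq_mul, inv_mul_cancel_right] at this
    exact hmiss this
  have hdR : Nat.card K ∣ Rsᶜ.ncard := card_dvd_ncard_of_mul_mem K _ fun k hk s hs hks =>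
    hs ((MulAction.mem_stabilizer_set.1 hk s).1 hks)
  have hRc2 : 2 ≤ Rsᶜ.ncard := by
    refine (Set.one_lt_ncard (Set.toFinite _)).2
      ⟨_, hmiss, (γs vs us)⁻¹ * h, fun hm => hmiss ((mul_mem_iff_of_mem_stabr hh _).1 hm), ?_⟩
    simpa using hh1
  have hYK : Nat.card K ≤ Xsᶜ.ncard := by
    rw [hYR]
    exact Nat.le_of_dvd (by omega) hdR
  have : Fintype ↥(Xsᶜ) := Fintype.ofFinite _
  have hcY : Fintype.card ↥(Xsᶜ) = Xsᶜ.ncard := by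
    rw [← Nat.card_eq_fintype_card, Nat.card_coe_set_eq]
  let δ : ↥(Xsᶜ) → ↥(Xsᶜ) → Γ := fun a b => (γs a us)⁻¹ * γs a b * γs b us
  have hδK : ∀ a b, a ≠ b → δ a b ∈ K := by
    intro a b hab
    have := htr a b a.2 b.2 (fun e => hab (Subtype.ext e))
    rw [hKdef, MulAction.mem_stabilizer_iff]
    simp only [δ, mul_assoc]
    rw [mul_smul, ← this, inv_smul_smul]
  have hgauge : ∀ a b : ↥(Xsᶜ), a ≠ b →
      MonoidHom.id Γ (δ a b) = (γs a us)⁻¹ * γs a b * ((γs b us)⁻¹)⁻¹ := by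
    intro a b _
    simp [δ]
  have hδbal : ¬ ∃ c, IsBalancedCycle δ c := by
    rintro ⟨c, hc⟩
    exact hbals ⟨_, hc.gauge (MonoidHom.id Γ) Subtype.val Subtype.val_injective
      (fun a => (γs a us)⁻¹) γs δ hgauge⟩
  have hYeq : Xsᶜ.ncard = Nat.card K := by
    refine le_antisymm ?_ hYK
    by_contra! hlt
    exact hδbal (exists_balanced_of_card K (hsub K hKtop) (by omega) δ hδK)
  obtain ⟨y, hy⟩ := exists_start_all_values K (hsub K hKtop) (by omega) δ hδK hδbal
  have hyu : (y : V) ≠ us := fun e => y.2 (e ▸ hu)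
  have hX0 : (insert us Xsᶜ).ncard = Nat.card K + 1 := by
    rw [Set.ncard_insert_of_notMem (by simpa using hu), hYeq]
  have hKc : (γs y us • (K : Set Γ)).ncard = Nat.card K := by
    rw [Set.ncard_smul_set, ← Nat.card_coe_set_eq]; rfl
  obtain ⟨g, hg⟩ : ∃ g : K, g ≠ 1 := by
    have : Nontrivial K := Finite.one_lt_card_iff_nontrivial.1 (by omega)
    exact exists_ne 1
  -- appending `us` to the paths in the complement of `Xs` that start at `y`
  have hle := hmin (insert us Xsᶜ) y us γs (γs y us • (K : Set Γ)) <| Or.inl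
    ⟨Set.mem_insert_of_mem _ y.2, Set.mem_insert _ _, hyu, hsh, by
      rintro _ ⟨k, hk, rfl⟩
      obtain ⟨q, hq, hqk⟩ := hy k hk
      obtain ⟨l, z, hlz⟩ : ∃ l z, y :: q = l ++ [z] := by
        rcases List.eq_nil_or_concat (y :: q) with h | ⟨l, z, h⟩
        · simp at h
        · exact ⟨l, z, by simpa using h⟩
      have hp := pathProd_gauge (MonoidHom.id Γ) Subtype.val (fun a : ↥(Xsᶜ) => (γs a us)⁻¹) γs δ
        hgauge q y z (isChain_ne_of_nodup hq) (by rw [hlz]; simp)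
      refine ⟨(y :: q).map Subtype.val ++ [us], by simp, ?_, ?_, by simp,
        by rw [List.getLast?_append]; simp, ?_⟩
      · have h1 : ((y :: q).map Subtype.val).Nodup := hq.map Subtype.val_injective
        refine h1.append (List.nodup_singleton us) ?_
        intro w hw hw'
        obtain ⟨x, _, rfl⟩ := List.mem_map.1 hw
        exact x.2 ((List.mem_singleton.1 hw') ▸ hu)
      · intro w hw
        rcases List.mem_append.1 hw with hw | hw
        · obtain ⟨x, _, rfl⟩ := List.mem_map.1 hw
          exact Set.mem_insert_of_mem _ x.2
        · rw [List.mem_singleton.1 hw]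
          exact Set.mem_insert _ _
      · have hs : pathProd γs ((y :: q).map Subtype.val ++ [us])
            = pathProd γs ((y :: q).map Subtype.val) * γs z us := by
          rw [hlz]
          simp only [List.map_append, List.map_cons, List.map_nil,
            List.append_assoc, List.cons_append, List.nil_append]
          rw [pathProd_append]
          simp [pathProd_cons_cons, pathProd_singleton]
        rw [hs]
        rw [MonoidHom.id_apply, hqk] at hp
        simp only [smul_eq_mul]
        rw [hp]
        group,
    ⟨g, mem_stabr_of_mul_mem (by
      rintro _ ⟨k, hk, rfl⟩
      exact ⟨k * g, K.mul_mem hk g.2, by simp [mul_assoc]⟩), by simpa using hg⟩, by omega⟩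
  -- now `|Γ| ≤ 2 |K|`, so the odd index of `K` is `1`
  have hidx := K.card_mul_index
  rw [Nat.card_eq_fintype_card (α := Γ)] at hidx
  have hKpos : 0 < Nat.card K := Nat.card_pos
  have hi2 : K.index ≤ 2 := by
    have h2 : Nat.card K * K.index ≤ Nat.card K * 2 := by omega
    exact Nat.le_of_mul_le_mul_left h2 hKpos
  have hio : Odd K.index := hodd.of_dvd_nat (Dvd.intro_left _ hidx)
  have hi0 : K.index ≠ 1 := fun e => hKtop (Subgroup.index_eq_one.1 e)
  obtain ⟨m, hm⟩ := hio
  omega
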